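/- arXiv:1112.3977 — 2 statements merged into one kernel-verified Lean document; each statement's English description precedes it below -/
import Mathlib

section
/- Let n ≥ 3 be an integer, m > 0, and k ∈ (0, (m+n+2)/2]. Let w: ℝⁿ → (0,∞) be smooth with F = ∫ |∇w|² dx, A = ∫ w^{2(m+n−k)/(m+n−2)} dx, B = ∫ w^{2(m+n)/(m+n−2)} dx finite and positive. For a smooth positive function v on ℝⁿ define the conformal GNS functional Q_k(v, w) = (∫ [|∇w|² + ((m+n−2)/(4(m+n−1)))·(−2mΔ(log v) − m(m+1)|∇ log v|²)·w²] v^m dx) · (∫ w^{2(m+n−k)/(m+n−2)} v^{m−k} dx)^{2m/(nk)} / (∫ w^{2(m+n)/(m+n−2)} v^m dx)^{(2m+k(n−2))/(nk)}. Suppose that w is a critical point at v ≡ 1 for variations of the density v, i.e. for every χ ∈ C_c^∞(ℝⁿ) the function t ↦ Q_k(1 + tχ, w) has derivative 0 at t = 0. Then w satisfies at every point of ℝⁿ the identity |∇w|² − ((m+n−2)/(2(m+n−1)))·Δ(w²) + [2(m−k)/(nk)]·(F/A)·w^{2(m+n−k)/(m+n−2)} = [(2m+k(n−2))/(nk)]·(F/B)·w^{2(m+n)/(m+n−2)}.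 -/
open MeasureTheory
open scoped RealInnerProductSpace

noncomputable section

/-- The Euclidean Laplacian `Δf = Σᵢ ∂²f/∂xᵢ²`. -/
def lapl {n : ℕ} (f : EuclideanSpace ℝ (Fin n) → ℝ) (x : EuclideanSpace ℝ (Fin n)) : ℝ :=
  ∑ i, iteratedFDeriv ℝ 2 f x ![EuclideanSpace.single i 1, EuclideanSpace.single i 1]

/-- The Dirichlet energy `F(w) = ∫ |∇w|²`. -/
def gnsF (n : ℕ) (w : EuclideanSpace ℝ (Fin n) → ℝ) : ℝ :=
  ∫ x, ‖gradient w x‖ ^ 2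

/-- `A(w) = ∫ w^{2(m+n-k)/(m+n-2)}`. -/
def gnsA (n : ℕ) (m k : ℝ) (w : EuclideanSpace ℝ (Fin n) → ℝ) : ℝ :=
  ∫ x, w x ^ (2 * (m + n - k) / (m + n - 2))

/-- `B(w) = ∫ w^{2(m+n)/(m+n-2)}`. -/
def gnsB (n : ℕ) (m : ℝ) (w : EuclideanSpace ℝ (Fin n) → ℝ) : ℝ :=
  ∫ x, w x ^ (2 * (m + n) / (m + n - 2))

/-- The conformal GNS functional of the smooth metric measure space
`(ℝⁿ, flat metric, v^m dx, m)`, evaluated at `w`; the zeroth-order term in the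
energy is the weighted scalar curvature `R_φ^m = -2mΔ(log v) - m(m+1)|∇ log v|²`. -/
def gnsQv (n : ℕ) (m k : ℝ) (v w : EuclideanSpace ℝ (Fin n) → ℝ) : ℝ :=
  (∫ x, (‖gradient w x‖ ^ 2 +
      ((m + n - 2) / (4 * (m + n - 1))) *
        (-(2 * m) * lapl (fun y => Real.log (v y)) x -
          m * (m + 1) * ‖gradient (fun y => Real.log (v y)) x‖ ^ 2) * w x ^ 2) *
        v x ^ m) *
    (∫ x, w x ^ (2 * (m + n - k) / (m + n - 2)) * v x ^ (m - k)) ^ (2 * m / ((n : ℝ) * k)) /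
    (∫ x, w x ^ (2 * (m + n) / (m + n - 2)) * v x ^ m) ^
      ((2 * m + k * ((n : ℝ) - 2)) / ((n : ℝ) * k))

open scoped Topology ContDiff

section PowerPerturbation

lemma exists_ball_abs_mul_le {X : Type*} {χ : X → ℝ} {M : ℝ} (hM : ∀ x, |χ x| ≤ M) :
    ∃ ε > 0, ∀ t ∈ Metric.ball (0 : ℝ) ε, ∀ x, |t * χ x| ≤ 1 / 2 := by
  refine ⟨1 / (2 * (|M| + 1)), by positivity, fun t ht x => ?_⟩
  rw [mem_ball_zero_iff, Real.norm_eq_abs, lt_div_iff₀ (by positivity)] at ht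
  rw [abs_mul]
  have h1 : |χ x| ≤ |M| + 1 := by linarith [hM x, le_abs_self M]
  nlinarith [mul_le_mul_of_nonneg_left h1 (abs_nonneg t)]

variable {X : Type*} [TopologicalSpace X] [MeasurableSpace X] [OpensMeasurableSpace X]
  {μ : Measure X}

/-- Real powers are bounded on `[1/2, 3/2]`. -/
lemma exists_bound_rpow_near_one (s : ℝ) :
    ∃ C, ∀ r ∈ Set.Icc (1 / 2 : ℝ) (3 / 2), |r ^ s| ≤ C := by
  have hc : ContinuousOn (fun r : ℝ => r ^ s) (Set.Icc (1 / 2 : ℝ) (3 / 2)) := fun r hr =>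
    (Real.continuousAt_rpow_const r s (Or.inl (by linarith [hr.1]))).continuousWithinAt
  simpa only [Real.norm_eq_abs] using isCompact_Icc.exists_bound_of_continuousOn hc

lemma one_add_mem_Icc {u : ℝ} (hu : |u| ≤ 1 / 2) : 1 + u ∈ Set.Icc (1 / 2 : ℝ) (3 / 2) := by
  rw [abs_le] at hu
  exact ⟨by linarith [hu.1], by linarith [hu.2]⟩

lemma aestronglyMeasurable_mul_one_add_rpow {a χ : X → ℝ} (ha : AEStronglyMeasurable a μ)
    (hχ : Continuous χ) (s t : ℝ) :
    AEStronglyMeasurable (fun x => a x * (1 + t * χ x) ^ s) μ :=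
  ha.mul ((by fun_prop : Continuous fun x => 1 + t * χ x).measurable.pow_const s
    ).aestronglyMeasurable

lemma integrable_mul_one_add_rpow {a χ : X → ℝ} (ha : Integrable a μ) (hχ : Continuous χ)
    (s : ℝ) {t : ℝ} (ht : ∀ x, |t * χ x| ≤ 1 / 2) :
    Integrable (fun x => a x * (1 + t * χ x) ^ s) μ := by
  obtain ⟨C, hC⟩ := exists_bound_rpow_near_one s
  refine (ha.norm.mul_const C).mono'
    (aestronglyMeasurable_mul_one_add_rpow ha.aestronglyMeasurable hχ s t)
    (Filter.Eventually.of_forall fun x => ?_)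
  rw [norm_mul]
  exact mul_le_mul_of_nonneg_left (hC _ (one_add_mem_Icc (ht x))) (norm_nonneg _)

lemma hasDerivAt_integral_mul_one_add_rpow {a χ : X → ℝ} (ha : Integrable a μ)
    (hχ : Continuous χ) {M : ℝ} (hM : ∀ x, |χ x| ≤ M) (s : ℝ) :
    HasDerivAt (fun t : ℝ => ∫ x, a x * (1 + t * χ x) ^ s ∂μ) (s * ∫ x, χ x * a x ∂μ) 0 := by
  obtain ⟨ε, hε, hb⟩ := exists_ball_abs_mul_le hM
  obtain ⟨C, hC⟩ := exists_bound_rpow_near_one (s - 1)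
  have h := (hasDerivAt_integral_of_dominated_loc_of_deriv_le (μ := μ)
    (F := fun t x => a x * (1 + t * χ x) ^ s)
    (F' := fun t x => a x * (χ x * s * (1 + t * χ x) ^ (s - 1)))
    (bound := fun x => ‖a x‖ * (M * |s| * C))
    (Metric.ball_mem_nhds (0 : ℝ) hε)
    (Filter.Eventually.of_forall
      (aestronglyMeasurable_mul_one_add_rpow ha.aestronglyMeasurable hχ s))
    (by simpa using ha)
    (by
      simp only [zero_mul, add_zero, Real.one_rpow, mul_one]
      exact ha.aestronglyMeasurable.mul (hχ.aestronglyMeasurable.mul_const s))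
    (Filter.Eventually.of_forall fun x t ht => ?_) (ha.norm.mul_const _)
    (Filter.Eventually.of_forall fun x t ht => ?_)).2
  · rw [← integral_const_mul]
    refine h.congr_deriv (integral_congr_ae (Filter.Eventually.of_forall fun x => ?_))
    simp only [zero_mul, add_zero, Real.one_rpow]
    ring
  · have h1 := hC _ (one_add_mem_Icc (hb t ht x))
    rw [norm_mul, norm_mul, norm_mul, Real.norm_eq_abs (χ x), Real.norm_eq_abs s,
      Real.norm_eq_abs ((1 + t * χ x) ^ (s - 1))]
    have hM0 : 0 ≤ M := (abs_nonneg _).trans (hM x)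
    gcongr
    exact hM x
  · have hpos : 1 + t * χ x ≠ 0 := by linarith [(one_add_mem_Icc (hb t ht x)).1]
    have h1 : HasDerivAt (fun t : ℝ => 1 + t * χ x) (χ x) t := by
      simpa using ((hasDerivAt_id t).mul_const (χ x)).const_add 1
    exact (h1.rpow_const (Or.inl hpos)).const_mul (a x)

end PowerPerturbation

section Laplacian

variable {n : ℕ}

lemma lapl_eq_sum_fderiv (f : EuclideanSpace ℝ (Fin n) → ℝ) (x : EuclideanSpace ℝ (Fin n)) :
    lapl f x = ∑ i, fderiv ℝ (fderiv ℝ f) x (EuclideanSpace.single i 1)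
      (EuclideanSpace.single i 1) := by
  simp [lapl, iteratedFDeriv_two_apply]

lemma lapl_eq_sum_fderiv_apply {f : EuclideanSpace ℝ (Fin n) → ℝ} (hf : ContDiff ℝ ∞ f)
    (x : EuclideanSpace ℝ (Fin n)) :
    lapl f x = ∑ i, fderiv ℝ (fun y => fderiv ℝ f y (EuclideanSpace.single i 1)) x
      (EuclideanSpace.single i 1) := by
  rw [lapl_eq_sum_fderiv]
  refine Finset.sum_congr rfl fun i _ => ?_
  have h : DifferentiableAt ℝ (fderiv ℝ f) x :=
    ((hf.fderiv_right (m := ∞) (by simp)).differentiable (by simp)) x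
  rw [fderiv_clm_apply h (differentiableAt_const _)]
  simp

lemma norm_gradient_sq_eq_sum (f : EuclideanSpace ℝ (Fin n) → ℝ) (x : EuclideanSpace ℝ (Fin n)) :
    ‖gradient f x‖ ^ 2 = ∑ i, fderiv ℝ f x (EuclideanSpace.single i 1) ^ 2 := by
  rw [EuclideanSpace.norm_sq_eq]
  refine Finset.sum_congr rfl fun i _ => ?_
  rw [← inner_gradient_left, EuclideanSpace.inner_single_right]
  simp

lemma contDiff_fderiv_apply {f : EuclideanSpace ℝ (Fin n) → ℝ} (hf : ContDiff ℝ ∞ f)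
    (e : EuclideanSpace ℝ (Fin n)) : ContDiff ℝ ∞ (fun y => fderiv ℝ f y e) :=
  (hf.fderiv_right (m := ∞) (by simp)).clm_apply contDiff_const

lemma contDiff_lapl {f : EuclideanSpace ℝ (Fin n) → ℝ} (hf : ContDiff ℝ ∞ f) :
    ContDiff ℝ ∞ (lapl f) := by
  rw [funext (lapl_eq_sum_fderiv_apply hf)]
  exact ContDiff.sum fun i _ => contDiff_fderiv_apply (contDiff_fderiv_apply hf _) _

lemma continuous_norm_gradient_sq {f : EuclideanSpace ℝ (Fin n) → ℝ} (hf : ContDiff ℝ ∞ f) :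
    Continuous (fun x => ‖gradient f x‖ ^ 2) := by
  rw [funext (norm_gradient_sq_eq_sum f)]
  exact continuous_finsetSum _ fun i _ => (contDiff_fderiv_apply hf _).continuous.pow 2

lemma hasCompactSupport_lapl {f : EuclideanSpace ℝ (Fin n) → ℝ} (hs : HasCompactSupport f) :
    HasCompactSupport (lapl f) := by
  refine ((hs.fderiv ℝ).fderiv ℝ).mono fun x hx => ?_
  contrapose! hx
  simp only [Function.mem_support, not_not] at hx
  simp [lapl_eq_sum_fderiv, hx]

lemma hasCompactSupport_norm_gradient_sq {f : EuclideanSpace ℝ (Fin n) → ℝ}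
    (hs : HasCompactSupport f) : HasCompactSupport (fun x => ‖gradient f x‖ ^ 2) := by
  refine (hs.fderiv ℝ).mono fun x hx => ?_
  contrapose! hx
  simp only [Function.mem_support, not_not] at hx
  simp [norm_gradient_sq_eq_sum, hx]

/-- Integration by parts for one directional derivative against a test function. -/
lemma integral_fderiv_apply_mul {f g : EuclideanSpace ℝ (Fin n) → ℝ} (hf : ContDiff ℝ ∞ f)
    (hs : HasCompactSupport f) (hg : ContDiff ℝ ∞ g) (e : EuclideanSpace ℝ (Fin n)) :
    ∫ x, fderiv ℝ f x e * g x = -∫ x, f x * fderiv ℝ g x e := by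
  rw [integral_mul_fderiv_eq_neg_fderiv_mul_of_integrable, neg_neg]
  · exact ((contDiff_fderiv_apply hf e).continuous.mul hg.continuous
      ).integrable_of_hasCompactSupport (hs.fderiv_apply ℝ e).mul_right
  · exact (hf.continuous.mul (contDiff_fderiv_apply hg e).continuous
      ).integrable_of_hasCompactSupport hs.mul_right
  · exact (hf.continuous.mul hg.continuous).integrable_of_hasCompactSupport hs.mul_right
  · exact fun x _ => hf.differentiable (by simp) x
  · exact fun x _ => hg.differentiable (by simp) x

/-- Green's identity against a test function. -/
lemma integral_lapl_mul {f g : EuclideanSpace ℝ (Fin n) → ℝ} (hf : ContDiff ℝ ∞ f)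
    (hs : HasCompactSupport f) (hg : ContDiff ℝ ∞ g) :
    ∫ x, lapl f x * g x = ∫ x, f x * lapl g x := by
  simp_rw [lapl_eq_sum_fderiv_apply hf, lapl_eq_sum_fderiv_apply hg, Finset.sum_mul,
    Finset.mul_sum]
  rw [integral_finsetSum, integral_finsetSum]
  · refine Finset.sum_congr rfl fun i _ => ?_
    rw [integral_fderiv_apply_mul (contDiff_fderiv_apply hf _) (hs.fderiv_apply ℝ _) hg,
      integral_fderiv_apply_mul hf hs (contDiff_fderiv_apply hg _), neg_neg]
  · exact fun i _ => (hf.continuous.mul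
      (contDiff_fderiv_apply (contDiff_fderiv_apply hg _) _).continuous
      ).integrable_of_hasCompactSupport hs.mul_right
  · exact fun i _ => ((contDiff_fderiv_apply (contDiff_fderiv_apply hf _) _).continuous.mul
      hg.continuous).integrable_of_hasCompactSupport
        ((hs.fderiv_apply ℝ _).fderiv_apply ℝ _).mul_right

lemma fderiv_log_one_add_mul {χ : EuclideanSpace ℝ (Fin n) → ℝ} (hχ : ContDiff ℝ ∞ χ) {t : ℝ}
    (hpos : ∀ x, 0 < 1 + t * χ x) (x : EuclideanSpace ℝ (Fin n)) :
    fderiv ℝ (fun y => Real.log (1 + t * χ y)) x = (t * (1 + t * χ x)⁻¹) • fderiv ℝ χ x := by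
  have h1 : HasFDerivAt (fun y => 1 + t * χ y) (t • fderiv ℝ χ x) x :=
    ((hχ.differentiable (by simp) x).hasFDerivAt.const_mul t).const_add 1
  rw [(h1.log (hpos x).ne').fderiv, smul_smul, mul_comm]

lemma norm_gradient_log_one_add_mul_sq {χ : EuclideanSpace ℝ (Fin n) → ℝ}
    (hχ : ContDiff ℝ ∞ χ) {t : ℝ} (hpos : ∀ x, 0 < 1 + t * χ x) (x : EuclideanSpace ℝ (Fin n)) :
    ‖gradient (fun y => Real.log (1 + t * χ y)) x‖ ^ 2 =
      t ^ 2 * ‖gradient χ x‖ ^ 2 / (1 + t * χ x) ^ 2 := by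
  simp_rw [norm_gradient_sq_eq_sum, fderiv_log_one_add_mul hχ hpos, smul_apply, smul_eq_mul,
    mul_pow, ← Finset.mul_sum, inv_pow]
  rw [div_eq_mul_inv]
  ac_rfl

lemma lapl_log_one_add_mul {χ : EuclideanSpace ℝ (Fin n) → ℝ}
    (hχ : ContDiff ℝ ∞ χ) {t : ℝ} (hpos : ∀ x, 0 < 1 + t * χ x) (x : EuclideanSpace ℝ (Fin n)) :
    lapl (fun y => Real.log (1 + t * χ y)) x =
      t * lapl χ x / (1 + t * χ x) - t ^ 2 * ‖gradient χ x‖ ^ 2 / (1 + t * χ x) ^ 2 := by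
  have h1 : HasFDerivAt (fun y => 1 + t * χ y) (t • fderiv ℝ χ x) x :=
    ((hχ.differentiable (by simp) x).hasFDerivAt.const_mul t).const_add 1
  have h2 : HasFDerivAt (fun y => t * (1 + t * χ y)⁻¹)
      (t • (-((1 + t * χ x) ^ 2)⁻¹ • (t • fderiv ℝ χ x))) x :=
    ((hasDerivAt_inv (hpos x).ne').comp_hasFDerivAt x h1).const_mul t
  have h3 : HasFDerivAt (fderiv ℝ χ) (fderiv ℝ (fderiv ℝ χ) x) x :=
    ((hχ.fderiv_right (m := ∞) (by simp)).differentiable (by simp) x).hasFDerivAt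
  have h4 : fderiv ℝ (fun y => Real.log (1 + t * χ y)) =
      fun y => (t * (1 + t * χ y)⁻¹) • fderiv ℝ χ y :=
    funext (fderiv_log_one_add_mul hχ hpos)
  rw [lapl_eq_sum_fderiv, lapl_eq_sum_fderiv, norm_gradient_sq_eq_sum, h4, (h2.fun_smul h3).fderiv,
    Finset.mul_sum, Finset.mul_sum, Finset.sum_div, Finset.sum_div, ← Finset.sum_sub_distrib]
  refine Finset.sum_congr rfl fun i _ => ?_
  simp
  ring

end Laplacian

section Variation

variable {n : ℕ} {w χ : EuclideanSpace ℝ (Fin n) → ℝ}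

/-- The energy density of `1 + tχ`, expanded in powers of `t`. -/
lemma energy_density_one_add_mul (hχ : ContDiff ℝ ∞ χ) {t : ℝ} (hpos : ∀ x, 0 < 1 + t * χ x)
    (m c : ℝ) (x : EuclideanSpace ℝ (Fin n)) :
    (‖gradient w x‖ ^ 2 + c * (-(2 * m) * lapl (fun y => Real.log (1 + t * χ y)) x -
        m * (m + 1) * ‖gradient (fun y => Real.log (1 + t * χ y)) x‖ ^ 2) * w x ^ 2) *
        (1 + t * χ x) ^ m =
      ‖gradient w x‖ ^ 2 * (1 + t * χ x) ^ m +
        t * (lapl χ x * (-(2 * m) * c * w x ^ 2) * (1 + t * χ x) ^ (m - 1)) +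
        t ^ 2 * (‖gradient χ x‖ ^ 2 * (c * (2 * m - m * (m + 1)) * w x ^ 2) *
          (1 + t * χ x) ^ (m - 2)) := by
  rw [lapl_log_one_add_mul hχ hpos, norm_gradient_log_one_add_mul_sq hχ hpos,
    Real.rpow_sub_one (hpos x).ne', Real.rpow_sub (hpos x), Real.rpow_two]
  have := (hpos x).ne'
  field_simp
  ring

/-- First variation of the energy in the density. -/
lemma hasDerivAt_energy (hw : ContDiff ℝ ∞ w)
    (hFint : Integrable (fun x => ‖gradient w x‖ ^ 2)) (hχ : ContDiff ℝ ∞ χ)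
    (hs : HasCompactSupport χ) (m c : ℝ) :
    HasDerivAt (fun t : ℝ => ∫ x, (‖gradient w x‖ ^ 2 +
      c * (-(2 * m) * lapl (fun y => Real.log (1 + t * χ y)) x -
        m * (m + 1) * ‖gradient (fun y => Real.log (1 + t * χ y)) x‖ ^ 2) * w x ^ 2) *
        (1 + t * χ x) ^ m)
      (m * (∫ x, χ x * ‖gradient w x‖ ^ 2) - m * (2 * c) * ∫ x, χ x * lapl (fun y => w y ^ 2) x)
      0 := by
  obtain ⟨M, hM⟩ := hs.exists_bound_of_continuous hχ.continuous
  simp only [Real.norm_eq_abs] at hM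
  have hb₁ : Integrable (fun x => lapl χ x * (-(2 * m) * c * w x ^ 2)) :=
    ((contDiff_lapl hχ).continuous.mul (continuous_const.mul (hw.continuous.pow 2))
      ).integrable_of_hasCompactSupport (hasCompactSupport_lapl hs).mul_right
  have hb₂ : Integrable
      (fun x => ‖gradient χ x‖ ^ 2 * (c * (2 * m - m * (m + 1)) * w x ^ 2)) :=
    ((continuous_norm_gradient_sq hχ).mul (continuous_const.mul (hw.continuous.pow 2))
      ).integrable_of_hasCompactSupport (hasCompactSupport_norm_gradient_sq hs).mul_right
  have hd := ((hasDerivAt_integral_mul_one_add_rpow hFint hχ.continuous hM m).add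
    ((hasDerivAt_id (0 : ℝ)).mul
      (hasDerivAt_integral_mul_one_add_rpow hb₁ hχ.continuous hM (m - 1)))).add
    (((hasDerivAt_id (0 : ℝ)).pow 2).mul
      (hasDerivAt_integral_mul_one_add_rpow hb₂ hχ.continuous hM (m - 2)))
  refine (hd.congr_of_eventuallyEq ?_).congr_deriv ?_
  · obtain ⟨ε, hε, hball⟩ := exists_ball_abs_mul_le hM
    filter_upwards [Metric.ball_mem_nhds (0 : ℝ) hε] with t ht
    have hle := hball t ht
    have hpos : ∀ x, 0 < 1 + t * χ x := fun x => by linarith [(one_add_mem_Icc (hle x)).1]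
    simp_rw [energy_density_one_add_mul hχ hpos]
    have i₀ := integrable_mul_one_add_rpow hFint hχ.continuous m hle
    have i₁ := integrable_mul_one_add_rpow hb₁ hχ.continuous (m - 1) hle
    have i₂ := integrable_mul_one_add_rpow hb₂ hχ.continuous (m - 2) hle
    rw [integral_add (i₀.fun_add (i₁.const_mul t)) (i₂.const_mul _), integral_add i₀ (i₁.const_mul t),
      integral_const_mul, integral_const_mul]
    simp
  · have hgreen := integral_lapl_mul hχ hs (hw.pow 2)
    have hb : ∫ x, lapl χ x * (-(2 * m) * c * w x ^ 2) =
        -(2 * m) * c * ∫ x, χ x * lapl (fun y => w y ^ 2) x := by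
      rw [← hgreen, ← integral_const_mul]
      congr 1
      ext x
      ring
    simp only [zero_mul, add_zero, Real.one_rpow, mul_one, one_mul, id_eq, Pi.pow_apply, hb]
    ring

end Variation

/-- Logarithmic differentiation of a critical quotient `N D₁^α / D₂^β`. -/
lemma deriv_relation_of_critical {N D₁ D₂ : ℝ → ℝ} {N' D₁' D₂' α β t : ℝ}
    (hN : HasDerivAt N N' t) (hD₁ : HasDerivAt D₁ D₁' t) (hD₂ : HasDerivAt D₂ D₂' t)
    (h₁ : 0 < D₁ t) (h₂ : 0 < D₂ t)
    (h : HasDerivAt (fun s => N s * D₁ s ^ α / D₂ s ^ β) 0 t) :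
    N' + α * (N t / D₁ t) * D₁' - β * (N t / D₂ t) * D₂' = 0 := by
  have hA := Real.rpow_pos_of_pos h₁ α
  have hB := Real.rpow_pos_of_pos h₂ β
  have hd := (hN.mul (hD₁.rpow_const (p := α) (Or.inl h₁.ne'))).div
    (hD₂.rpow_const (p := β) (Or.inl h₂.ne')) hB.ne'
  have he := hd.unique h
  rw [Real.rpow_sub_one h₁.ne', Real.rpow_sub_one h₂.ne'] at he
  simp only [Pi.mul_apply] at he
  have hn := h₁.ne'
  have hn' := h₂.ne'
  have hAn := hA.ne'
  have hBn := hB.ne'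
  have hq : (N' + α * (N t / D₁ t) * D₁' - β * (N t / D₂ t) * D₂') *
      (D₁ t ^ α / D₂ t ^ β) = 0 := by
    rw [← he]
    field_simp
  exact (mul_eq_zero.1 hq).resolve_right (div_pos hA hB).ne'

/-- the identity satisfied by a critical point of the conformal GNS
functional at `v ≡ 1` for variations of the density `v`. -/
theorem gns_measure_critical (n : ℕ) (hn : 3 ≤ n) (m k : ℝ) (hm : 0 < m)
    (hk : 0 < k) (hk' : k ≤ (m + n + 2) / 2)
    (w : EuclideanSpace ℝ (Fin n) → ℝ)
    (hsmooth : ContDiff ℝ (⊤ : ℕ∞) w) (hpos : ∀ x, 0 < w x)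
    (hFint : Integrable (fun x => ‖gradient w x‖ ^ 2))
    (hAint : Integrable (fun x => w x ^ (2 * (m + (n : ℝ) - k) / (m + (n : ℝ) - 2))))
    (hBint : Integrable (fun x => w x ^ (2 * (m + (n : ℝ)) / (m + (n : ℝ) - 2))))
    (hF : 0 < gnsF n w) (hA : 0 < gnsA n m k w) (hB : 0 < gnsB n m w)
    (hcrit : ∀ χ : EuclideanSpace ℝ (Fin n) → ℝ, ContDiff ℝ (⊤ : ℕ∞) χ → HasCompactSupport χ →
      HasDerivAt (fun t : ℝ => gnsQv n m k (fun x => 1 + t * χ x) w) 0 0) :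
    ∀ x, ‖gradient w x‖ ^ 2
        - ((m + n - 2) / (2 * (m + n - 1))) * lapl (fun y => w y ^ 2) x
        + (2 * (m - k) / ((n : ℝ) * k)) * (gnsF n w / gnsA n m k w) *
          w x ^ (2 * (m + n - k) / (m + (n : ℝ) - 2))
      = ((2 * m + k * ((n : ℝ) - 2)) / ((n : ℝ) * k)) * (gnsF n w / gnsB n m w) *
          w x ^ (2 * (m + n) / (m + (n : ℝ) - 2)) := by

  have hn' : (3 : ℝ) ≤ n := by exact_mod_cast hn
  set c : ℝ := (m + n - 2) / (4 * (m + n - 1)) with hc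
  have hc' : (m + n - 2) / (2 * (m + n - 1)) = 2 * c := by
    have : m + n - 1 ≠ 0 := by linarith
    rw [hc]
    field_simp
    ring
  set p := 2 * (m + n - k) / (m + (n : ℝ) - 2) with hp
  set q := 2 * (m + n) / (m + (n : ℝ) - 2) with hq
  set α := 2 * m / ((n : ℝ) * k) with hα
  set β := (2 * m + k * ((n : ℝ) - 2)) / ((n : ℝ) * k) with hβ
  set F := gnsF n w with hFdef
  set A := gnsA n m k w with hAdef
  set B := gnsB n m w with hBdef
  have hα' : 2 * (m - k) / ((n : ℝ) * k) = α * (m - k) / m := by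
    rw [hα]
    field_simp
  rw [hc', hα']
  have cont_rpow : ∀ s : ℝ, Continuous (fun x => w x ^ s) := fun s =>
    hsmooth.continuous.rpow_const fun x => Or.inl (hpos x).ne'
  have cont_grad := continuous_norm_gradient_sq hsmooth
  have cont_lapl : Continuous (lapl (fun y => w y ^ 2)) := (contDiff_lapl (hsmooth.pow 2)).continuous
  have key : ∀ χ : EuclideanSpace ℝ (Fin n) → ℝ, ContDiff ℝ (⊤ : ℕ∞) χ → HasCompactSupport χ →
      ∫ x, χ x • (‖gradient w x‖ ^ 2 - 2 * c * lapl (fun y => w y ^ 2) x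
        + α * (m - k) / m * (F / A) * w x ^ p - β * (F / B) * w x ^ q) = 0 := by
    intro χ hχ hs
    obtain ⟨M, hM⟩ := hs.exists_bound_of_continuous hχ.continuous
    simp only [Real.norm_eq_abs] at hM
    have hrel := deriv_relation_of_critical (hasDerivAt_energy hsmooth hFint hχ hs m c)
      (hasDerivAt_integral_mul_one_add_rpow hAint hχ.continuous hM (m - k))
      (hasDerivAt_integral_mul_one_add_rpow hBint hχ.continuous hM m)
      (by simpa [hAdef, gnsA, hp] using hA) (by simpa [hBdef, gnsB, hq] using hB) (hcrit χ hχ hs)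
    have hlog : ∀ x, lapl (fun _ : EuclideanSpace ℝ (Fin n) => Real.log 1) x = 0 := fun x => by
      simp [lapl_eq_sum_fderiv]
    have hgrad : ∀ x, gradient (fun _ : EuclideanSpace ℝ (Fin n) => Real.log 1) x = 0 :=
      fun x => by simp
    simp only [zero_mul, add_zero, Real.one_rpow, mul_one, hlog, hgrad, norm_zero, mul_zero,
      sub_zero, ne_eq, OfNat.ofNat_ne_zero, not_false_eq_true, zero_pow] at hrel
    change m * (∫ x, χ x * ‖gradient w x‖ ^ 2)
      - m * (2 * c) * (∫ x, χ x * lapl (fun y => w y ^ 2) x)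
      + α * (F / A) * ((m - k) * ∫ x, χ x * w x ^ p)
      - β * (F / B) * (m * ∫ x, χ x * w x ^ q) = 0 at hrel
    have int : ∀ {g : EuclideanSpace ℝ (Fin n) → ℝ}, Continuous g →
        Integrable (fun x => χ x * g x) := fun hg =>
      (hχ.continuous.mul hg).integrable_of_hasCompactSupport hs.mul_right
    have hexp : ∀ x, χ x • (‖gradient w x‖ ^ 2 - 2 * c * lapl (fun y => w y ^ 2) x
        + α * (m - k) / m * (F / A) * w x ^ p - β * (F / B) * w x ^ q) =
        χ x * ‖gradient w x‖ ^ 2 - 2 * c * (χ x * lapl (fun y => w y ^ 2) x)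
        + α * (m - k) / m * (F / A) * (χ x * w x ^ p) - β * (F / B) * (χ x * w x ^ q) :=
      fun x => by rw [smul_eq_mul]; ring
    have i₁ := int cont_grad
    have i₂ := (int cont_lapl).const_mul (2 * c)
    have i₃ := (int (cont_rpow p)).const_mul (α * (m - k) / m * (F / A))
    have i₄ := (int (cont_rpow q)).const_mul (β * (F / B))
    simp_rw [hexp]
    rw [integral_sub ((i₁.sub' i₂).fun_add i₃) i₄, integral_add (i₁.sub' i₂) i₃, integral_sub i₁ i₂,
      integral_const_mul, integral_const_mul, integral_const_mul]
    refine (mul_eq_zero.1 (Eq.trans ?_ hrel)).resolve_left hm.ne'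
    field_simp
  have hcont : Continuous fun x => ‖gradient w x‖ ^ 2 - 2 * c * lapl (fun y => w y ^ 2) x
      + α * (m - k) / m * (F / A) * w x ^ p - β * (F / B) * w x ^ q :=
    ((cont_grad.sub (cont_lapl.const_mul _)).add ((cont_rpow p).const_mul _)).sub
      ((cont_rpow q).const_mul _)
  have hae := ae_eq_zero_of_integral_contDiff_smul_eq_zero
    (hcont.locallyIntegrable (μ := volume)) key
  intro x
  exact sub_eq_zero.1 (congrFun ((Continuous.ae_eq_iff_eq volume hcont continuous_const).1 hae) x)
end
end

section
/- Let n ≥ 3 be an integer, m > 0, and k ∈ (0, (m+n+2)/2]. Let w: ℝⁿ → (0,∞) be smooth with F = ∫ |∇w|², A = ∫ w^{2(m+n−k)/(m+n−2)}, B = ∫ w^{2(m+n)/(m+n−2)}, and ∫ w² all finite, and F, A, B positive. Suppose w satisfies both Euler–Lagrange identities: (i) −Δw + [2m(m+n−k)/(nk(m+n−2))]·(F/A)·w^{(m+n+2−2k)/(m+n−2)} = [(m+n)(2m+k(n−2))/(nk(m+n−2))]·(F/B)·w^{(m+n+2)/(m+n−2)} on ℝⁿ, and (ii) |∇w|² −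 ((m+n−2)/(2(m+n−1)))·Δ(w²) + [2(m−k)/(nk)]·(F/A)·w^{2(m+n−k)/(m+n−2)} = [(2m+k(n−2))/(nk)]·(F/B)·w^{2(m+n)/(m+n−2)} on ℝⁿ. Then k = 1, and the function u = w^{−2/(m+n−2)} is a quadratic polynomial: there exist α > 0, b ∈ ℝⁿ, and γ ∈ ℝ with 4αγ > |b|² such that u(x) = α|x|² + ⟨b, x⟩ + γ for all x; in particular Hess u = (Δu/n)·Id with Δu constant. -/
open MeasureTheory
open scoped RealInnerProductSpace

noncomputable section

/-- The `(i,j)` entry of the Euclidean Hessian matrix of `f` at `x`. -/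
def hess {n : ℕ} (f : EuclideanSpace ℝ (Fin n) → ℝ) (x : EuclideanSpace ℝ (Fin n))
    (i j : Fin n) : ℝ :=
  iteratedFDeriv ℝ 2 f x ![EuclideanSpace.single i 1, EuclideanSpace.single j 1]

/-- The partial derivative of `f` in the `i`-th coordinate direction. -/
def partialDeriv {n : ℕ} (i : Fin n) (f : EuclideanSpace ℝ (Fin n) → ℝ)
    (x : EuclideanSpace ℝ (Fin n)) : ℝ :=
  fderiv ℝ f x (EuclideanSpace.single i 1)

section PartialDeriv

variable {n : ℕ} {f g : EuclideanSpace ℝ (Fin n) → ℝ} {x : EuclideanSpace ℝ (Fin n)}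

lemma ContDiff.partialDeriv (hf : ContDiff ℝ (⊤ : ℕ∞) f) (i : Fin n) :
    ContDiff ℝ (⊤ : ℕ∞) (partialDeriv i f) := by
  have h : ContDiff ℝ (⊤ : ℕ∞) (fderiv ℝ f) := hf.fderiv_right (by simp)
  exact h.clm_apply contDiff_const

lemma ContDiff.differentiableAt_of_smooth (hf : ContDiff ℝ (⊤ : ℕ∞) f) :
    DifferentiableAt ℝ f x :=
  (hf.differentiable (by simp)).differentiableAt

lemma partialDeriv_const (i : Fin n) (c : ℝ) : partialDeriv i (fun _ => c) x = 0 := by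
  simp [partialDeriv]

lemma partialDeriv_sub (i : Fin n) (hf : DifferentiableAt ℝ f x)
    (hg : DifferentiableAt ℝ g x) :
    partialDeriv i (fun y => f y - g y) x = partialDeriv i f x - partialDeriv i g x := by
  simp [partialDeriv, fderiv_fun_sub hf hg]

lemma partialDeriv_mul (i : Fin n) (hf : DifferentiableAt ℝ f x)
    (hg : DifferentiableAt ℝ g x) :
    partialDeriv i (fun y => f y * g y) x
      = f x * partialDeriv i g x + g x * partialDeriv i f x := by
  simp [partialDeriv, fderiv_fun_mul hf hg]

lemma partialDeriv_const_mul (i : Fin n) (c : ℝ) (hf : DifferentiableAt ℝ f x) :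
    partialDeriv i (fun y => c * f y) x = c * partialDeriv i f x := by
  simp [partialDeriv, fderiv_const_mul hf]

lemma partialDeriv_sum {ι : Type*} (s : Finset ι) (i : Fin n)
    {F : ι → EuclideanSpace ℝ (Fin n) → ℝ} (hF : ∀ j ∈ s, DifferentiableAt ℝ (F j) x) :
    partialDeriv i (fun y => ∑ j ∈ s, F j y) x = ∑ j ∈ s, partialDeriv i (F j) x := by
  simp [partialDeriv, fderiv_fun_sum hF]

lemma partialDeriv_rpow (i : Fin n) (p : ℝ) (hf : DifferentiableAt ℝ f x) (hx : f x ≠ 0) :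
    partialDeriv i (fun y => f y ^ p) x = p * f x ^ (p - 1) * partialDeriv i f x := by
  simp [partialDeriv, (hf.hasFDerivAt.rpow_const (p := p) (Or.inl hx)).fderiv]

lemma partialDeriv_partialDeriv (hf : ContDiff ℝ (⊤ : ℕ∞) f) (i j : Fin n) :
    partialDeriv i (partialDeriv j f) x = iteratedFDeriv ℝ 2 f x
      ![EuclideanSpace.single i 1, EuclideanSpace.single j 1] := by
  have h : ContDiff ℝ (⊤ : ℕ∞) (fderiv ℝ f) := hf.fderiv_right (by simp)
  have hd : DifferentiableAt ℝ (fderiv ℝ f) x := (h.differentiable (by simp)).differentiableAt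
  rw [iteratedFDeriv_two_apply]
  unfold partialDeriv
  rw [fderiv_clm_apply hd (differentiableAt_const _)]
  simp

lemma partialDeriv_comm (hf : ContDiff ℝ (⊤ : ℕ∞) f) (i j : Fin n) :
    partialDeriv i (partialDeriv j f) x = partialDeriv j (partialDeriv i f) x := by
  rw [partialDeriv_partialDeriv hf, partialDeriv_partialDeriv hf, iteratedFDeriv_two_apply,
    iteratedFDeriv_two_apply]
  have h : IsSymmSndFDerivAt ℝ f x :=
    (hf.contDiffAt (x := x)).isSymmSndFDerivAt (by
      simp only [minSmoothness_of_isRCLikeNormedField]; exact WithTop.coe_le_coe.2 le_top)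
  exact h _ _

lemma lapl_eq_sum_partialDeriv (hf : ContDiff ℝ (⊤ : ℕ∞) f) :
    lapl f x = ∑ i, partialDeriv i (partialDeriv i f) x := by
  simp [lapl, partialDeriv_partialDeriv hf]

lemma norm_gradient_sq : ‖gradient f x‖ ^ 2 = ∑ i, partialDeriv i f x ^ 2 := by
  rw [EuclideanSpace.norm_sq_eq]
  refine Finset.sum_congr rfl fun i _ => ?_
  have h : partialDeriv i f x = gradient f x i := by
    have h1 : ⟪gradient f x, EuclideanSpace.single i (1 : ℝ)⟫
        = fderiv ℝ f x (EuclideanSpace.single i 1) := by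
      simp [gradient]
    rw [partialDeriv, ← h1, EuclideanSpace.inner_single_right]
    simp
  rw [h, Real.norm_eq_abs, sq_abs]

lemma fderiv_eq_zero_of_partialDeriv (h : ∀ i, partialDeriv i f x = 0) : fderiv ℝ f x = 0 := by
  have : ‖gradient f x‖ ^ 2 = 0 := by rw [norm_gradient_sq]; simp [h]
  simpa [gradient] using this

lemma norm_fderiv_sq : ‖fderiv ℝ f x‖ ^ 2 = ∑ i, partialDeriv i f x ^ 2 := by
  rw [← norm_gradient_sq]
  simp [gradient]

lemma ContDiff.rpow_of_pos (hf : ContDiff ℝ (⊤ : ℕ∞) f) (hpos : ∀ y, 0 < f y) (p : ℝ) :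
    ContDiff ℝ (⊤ : ℕ∞) (fun y => f y ^ p) :=
  hf.rpow_const_of_ne fun y => (hpos y).ne'

lemma partialDeriv_partialDeriv_rpow (hf : ContDiff ℝ (⊤ : ℕ∞) f) (hpos : ∀ y, 0 < f y) (p : ℝ)
    (i : Fin n) :
    partialDeriv i (partialDeriv i (fun y => f y ^ p)) x
      = p * f x ^ (p - 1) * partialDeriv i (partialDeriv i f) x
        + p * (p - 1) * f x ^ (p - 2) * partialDeriv i f x ^ 2 := by
  have h1 : partialDeriv i (fun y => f y ^ p)
      = fun y => p * (f y ^ (p - 1) * partialDeriv i f y) := by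
    funext y
    rw [partialDeriv_rpow i p hf.differentiableAt_of_smooth (hpos y).ne', mul_assoc]
  have hq := hf.rpow_of_pos hpos (p - 1)
  have hd := hf.partialDeriv i
  rw [h1, partialDeriv_const_mul i p (hq.mul hd).differentiableAt_of_smooth,
    partialDeriv_mul i hq.differentiableAt_of_smooth hd.differentiableAt_of_smooth,
    partialDeriv_rpow i _ hf.differentiableAt_of_smooth (hpos x).ne',
    show p - 1 - 1 = p - 2 by ring]
  ring

lemma lapl_rpow (hf : ContDiff ℝ (⊤ : ℕ∞) f) (hpos : ∀ y, 0 < f y) (p : ℝ) :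
    lapl (fun y => f y ^ p) x
      = p * f x ^ (p - 1) * lapl f x
        + p * (p - 1) * f x ^ (p - 2) * ‖gradient f x‖ ^ 2 := by
  rw [lapl_eq_sum_partialDeriv (hf.rpow_of_pos hpos p), lapl_eq_sum_partialDeriv hf,
    norm_gradient_sq, Finset.mul_sum, Finset.mul_sum, ← Finset.sum_add_distrib]
  exact Finset.sum_congr rfl fun i _ => partialDeriv_partialDeriv_rpow hf hpos p i

lemma norm_gradient_rpow_sq (hf : ContDiff ℝ (⊤ : ℕ∞) f) (hpos : ∀ y, 0 < f y) (p : ℝ) :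
    ‖gradient (fun y => f y ^ p) x‖ ^ 2
      = (p * f x ^ (p - 1)) ^ 2 * ‖gradient f x‖ ^ 2 := by
  rw [norm_gradient_sq, norm_gradient_sq, Finset.mul_sum]
  refine Finset.sum_congr rfl fun i _ => ?_
  rw [partialDeriv_rpow i p hf.differentiableAt_of_smooth (hpos x).ne', mul_pow]

end PartialDeriv

section Bochner

variable {n : ℕ} {u : EuclideanSpace ℝ (Fin n) → ℝ}

lemma partialDeriv_laplacian (hu : ContDiff ℝ (⊤ : ℕ∞) u) (j : Fin n)
    (x : EuclideanSpace ℝ (Fin n)) :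
    ∑ i, partialDeriv i (partialDeriv i (partialDeriv j u)) x = partialDeriv j (lapl u) x := by
  have h : lapl u = fun y => ∑ i, partialDeriv i (partialDeriv i u) y :=
    funext fun y => lapl_eq_sum_partialDeriv hu
  rw [h, partialDeriv_sum _ _
    fun i _ => ((hu.partialDeriv i).partialDeriv i).differentiableAt_of_smooth]
  refine Finset.sum_congr rfl fun i _ => ?_
  rw [← partialDeriv_comm (hu.partialDeriv i)]
  congr 1
  exact funext fun y => partialDeriv_comm hu i j

/-- If `|∇u|² = P u^k - Q`, then `∇u` is an eigenvector of the Hessian of `u`. -/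
lemma sum_partialDeriv_mul_hessian (hu : ContDiff ℝ (⊤ : ℕ∞) u) (hpos : ∀ y, 0 < u y)
    {P Q k : ℝ} (hgrad : ∀ y, ‖gradient u y‖ ^ 2 = P * u y ^ k - Q) (i : Fin n)
    (x : EuclideanSpace ℝ (Fin n)) :
    ∑ j, partialDeriv j u x * partialDeriv i (partialDeriv j u) x
      = P * k / 2 * u x ^ (k - 1) * partialDeriv i u x := by
  have h1 : (fun y => ∑ j, partialDeriv j u y * partialDeriv j u y)
      = fun y => P * u y ^ k - Q := by
    funext y
    rw [← hgrad, norm_gradient_sq]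
    exact Finset.sum_congr rfl fun j _ => (sq _).symm
  have h2 := congrArg (fun f => partialDeriv i f x) h1
  have hd := fun j => (hu.partialDeriv j).differentiableAt_of_smooth (x := x)
  have hk := (hu.rpow_of_pos hpos k).differentiableAt_of_smooth (x := x)
  simp only [partialDeriv_sum _ i fun j _ => (hd j).fun_mul (hd j)] at h2
  rw [partialDeriv_sub i (hk.const_mul P) (differentiableAt_const Q), partialDeriv_const,
    partialDeriv_const_mul i P hk,
    partialDeriv_rpow i k hu.differentiableAt_of_smooth (hpos x).ne'] at h2
  simp only [partialDeriv_mul i (hd _) (hd _), ← two_mul] at h2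
  rw [← Finset.mul_sum] at h2
  linarith

/-- Bochner's formula for a positive function with `|∇u|² = P u^k - Q` and `Δu = R u^(k-1)`. -/
lemma sum_hessian_sq (hu : ContDiff ℝ (⊤ : ℕ∞) u) (hpos : ∀ y, 0 < u y)
    {P Q R k : ℝ} (hgrad : ∀ y, ‖gradient u y‖ ^ 2 = P * u y ^ k - Q)
    (hlapl : ∀ y, lapl u y = R * u y ^ (k - 1)) (x : EuclideanSpace ℝ (Fin n)) :
    ∑ i, ∑ j, partialDeriv i (partialDeriv j u) x ^ 2
      = P * k / 2 * R * (u x ^ (k - 1)) ^ 2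
        + (P * k / 2 - R) * (k - 1) * u x ^ (k - 2) * (P * u x ^ k - Q) := by
  have hd := fun j => (hu.partialDeriv j).differentiableAt_of_smooth (x := x)
  have hdd := fun i j => ((hu.partialDeriv j).partialDeriv i).differentiableAt_of_smooth (x := x)
  have hk := (hu.rpow_of_pos hpos (k - 1)).differentiableAt_of_smooth (x := x)
  have h1 : ∀ i, partialDeriv i
      (fun y => ∑ j, partialDeriv j u y * partialDeriv i (partialDeriv j u) y) x
      = partialDeriv i (fun y => P * k / 2 * (u y ^ (k - 1) * partialDeriv i u y)) x := by
    intro i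
    congr 1
    funext y
    rw [sum_partialDeriv_mul_hessian hu hpos hgrad, mul_assoc]
  have h2 : ∀ i, ∑ j, (partialDeriv j u x * partialDeriv i (partialDeriv i (partialDeriv j u)) x
        + partialDeriv i (partialDeriv j u) x ^ 2)
      = P * k / 2 * (u x ^ (k - 1) * partialDeriv i (partialDeriv i u) x
        + (k - 1) * u x ^ (k - 2) * partialDeriv i u x ^ 2) := by
    intro i
    have := h1 i
    rw [partialDeriv_sum _ i fun j _ => (hd j).fun_mul (hdd i j),
      partialDeriv_const_mul i _ (hk.fun_mul (hd i)), partialDeriv_mul i hk (hd i),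
      partialDeriv_rpow i _ hu.differentiableAt_of_smooth (hpos x).ne'] at this
    simp only [partialDeriv_mul i (hd _) (hdd i _)] at this
    rw [show k - 1 - 1 = k - 2 by ring] at this
    simp only [sq]
    rw [this]
    ring
  have h3 : ∑ j, partialDeriv j u x * ∑ i, partialDeriv i (partialDeriv i (partialDeriv j u)) x
      = R * (k - 1) * u x ^ (k - 2) * ‖gradient u x‖ ^ 2 := by
    rw [norm_gradient_sq, Finset.mul_sum]
    refine Finset.sum_congr rfl fun j _ => ?_
    rw [partialDeriv_laplacian hu, funext hlapl, partialDeriv_const_mul j _ hk,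
      partialDeriv_rpow j _ hu.differentiableAt_of_smooth (hpos x).ne',
      show k - 1 - 1 = k - 2 by ring]
    ring
  have h4 := Finset.sum_congr (rfl : (Finset.univ : Finset (Fin n)) = Finset.univ)
    fun i _ => h2 i
  simp only [Finset.sum_add_distrib] at h4
  rw [Finset.sum_comm] at h4
  simp only [← Finset.mul_sum] at h4
  rw [h3, Finset.sum_add_distrib, ← Finset.mul_sum, ← Finset.mul_sum, ← norm_gradient_sq,
    ← lapl_eq_sum_partialDeriv hu, hlapl, hgrad] at h4
  linear_combination h4

end Bochner

section Matrix

variable {n : ℕ}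

lemma sum_sub_scalar_sq (H : Fin n → Fin n → ℝ) (t : ℝ) :
    ∑ i, ∑ j, (H i j - t * if i = j then 1 else 0) ^ 2
      = ∑ i, ∑ j, H i j ^ 2 - 2 * t * ∑ i, H i i + n * t ^ 2 := by
  have h : ∀ i j : Fin n, (H i j - t * if i = j then 1 else 0) ^ 2
      = H i j ^ 2 + if i = j then t ^ 2 - 2 * t * H i j else 0 := by
    intro i j
    split_ifs <;> ring
  simp only [h, Finset.sum_add_distrib, Finset.sum_ite_eq, Finset.mem_univ, if_true,
    Finset.sum_sub_distrib, ← Finset.mul_sum]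
  simp
  ring

/-- Refined Cauchy-Schwarz inequality for a matrix with a known eigenvector. -/
lemma le_sum_sq_of_eigenvector (H : Fin n → Fin n → ℝ) (v : Fin n → ℝ) (l t : ℝ)
    (hv : 0 < ∑ i, v i ^ 2) (hH : ∀ i, ∑ j, v j * H i j = l * v i) :
    l ^ 2 + 2 * t * (∑ i, H i i - l) - (n - 1) * t ^ 2 ≤ ∑ i, ∑ j, H i j ^ 2 := by
  set V := ∑ i, v i ^ 2 with hV
  set s := (l - t) / V with hs
  have hsV : s * V = l - t := div_mul_cancel₀ _ hv.ne'
  have h0 : 0 ≤ ∑ i, ∑ j, ((H i j - t * if i = j then 1 else 0) - s * (v i * v j)) ^ 2 :=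
    Finset.sum_nonneg fun i _ => Finset.sum_nonneg fun j _ => sq_nonneg _
  have h : ∀ i j : Fin n, ((H i j - t * if i = j then 1 else 0) - s * (v i * v j)) ^ 2
      = (H i j - t * if i = j then 1 else 0) ^ 2 - 2 * s * v i * (v j * H i j)
        + s ^ 2 * v i ^ 2 * v j ^ 2 + if i = j then 2 * s * t * v i ^ 2 else 0 := by
    intro i j
    split_ifs with hij
    · subst hij; ring
    · ring
  simp only [h, Finset.sum_add_distrib, Finset.sum_sub_distrib, Finset.sum_ite_eq,
    Finset.mem_univ, if_true, ← Finset.mul_sum, hH, ← Finset.sum_mul, ← hV] at h0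
  have h5 : ∑ i, 2 * s * v i * (l * v i) = 2 * s * l * V := by
    rw [hV, Finset.mul_sum]
    exact Finset.sum_congr rfl fun i _ => by ring
  have h6 := sum_sub_scalar_sq H t
  rw [h5, h6] at h0
  have h7 : s ^ 2 * V * V = (l - t) ^ 2 := by rw [← hsV]; ring
  have h8 : 2 * s * l * V = 2 * l * (l - t) := by rw [← hsV]; ring
  have h9 : 2 * s * t * V = 2 * t * (l - t) := by rw [← hsV]; ring
  rw [h7, h8, h9] at h0
  linarith

end Matrix

/-- A function whose Hessian is a constant multiple of the identity is a quadratic polynomial. -/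
lemma eq_quadratic_of_hessian {n : ℕ} {u : EuclideanSpace ℝ (Fin n) → ℝ}
    (hu : ContDiff ℝ (⊤ : ℕ∞) u) {c : ℝ}
    (hH : ∀ x i j, partialDeriv i (partialDeriv j u) x = c * if i = j then 1 else 0) :
    ∃ (b : EuclideanSpace ℝ (Fin n)) (γ : ℝ), ∀ x, u x = c / 2 * ‖x‖ ^ 2 + ⟪b, x⟫ + γ := by
  set b : EuclideanSpace ℝ (Fin n) := WithLp.toLp 2 fun j => partialDeriv j u 0 with hb
  have hlin : ∀ x j, partialDeriv j u x = c * x j + b j := by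
    intro x j
    have hcoord : Differentiable ℝ fun y : EuclideanSpace ℝ (Fin n) => c * y j := by fun_prop
    have hdiff := (hu.partialDeriv j).differentiable (by simp)
    have hpc : ∀ i y, partialDeriv i (fun y : EuclideanSpace ℝ (Fin n) => c * y j) y
        = c * if i = j then 1 else 0 := by
      intro i y
      have hp : HasFDerivAt (fun z : EuclideanSpace ℝ (Fin n) => c * z j)
          (c • EuclideanSpace.proj j) y :=
        ((EuclideanSpace.proj j : EuclideanSpace ℝ (Fin n) →L[ℝ] ℝ).hasFDerivAt).const_mul c
      rw [partialDeriv, hp.fderiv]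
      simp [eq_comm]
    have hz : ∀ y, fderiv ℝ (fun y => partialDeriv j u y - c * y j) y = 0 := by
      refine fun y => fderiv_eq_zero_of_partialDeriv fun i => ?_
      rw [partialDeriv_sub i (hdiff y) (hcoord y), hH, hpc, sub_self]
    have := is_const_of_fderiv_eq_zero (hdiff.sub hcoord) hz x 0
    simp only [Pi.sub_apply] at this
    have hb' : b j = partialDeriv j u 0 := rfl
    rw [hb']
    simp at this
    linarith
  refine ⟨b, u 0, fun x => ?_⟩
  have hq : ∀ y : EuclideanSpace ℝ (Fin n),
      HasFDerivAt (fun y : EuclideanSpace ℝ (Fin n) => c / 2 * ‖y‖ ^ 2 + ⟪b, y⟫)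
        ((c / 2) • 2 • (innerSL ℝ) y + (innerSL ℝ) b) y := fun y =>
    ((hasStrictFDerivAt_norm_sq y).hasFDerivAt.const_mul (c / 2)).fun_add
      (innerSL ℝ b).hasFDerivAt
  have hdiff := hu.differentiable (by simp)
  have hz : ∀ y, fderiv ℝ (fun y => u y - (c / 2 * ‖y‖ ^ 2 + ⟪b, y⟫)) y = 0 := by
    refine fun y => fderiv_eq_zero_of_partialDeriv fun i => ?_
    rw [partialDeriv_sub i (hdiff y) (hq y).differentiableAt, hlin y i,
      partialDeriv, (hq y).fderiv]
    simp [EuclideanSpace.inner_single_right]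
    ring
  have := is_const_of_fderiv_eq_zero (hdiff.sub fun y => (hq y).differentiableAt) hz x 0
  simp only [Pi.sub_apply] at this
  simp at this
  linarith

section FiniteMeasure

variable {n : ℕ}

/-- A square-integrable function on `ℝⁿ` is not bounded away from zero. -/
lemma exists_lt_of_integrable_sq [NeZero n] {w : EuclideanSpace ℝ (Fin n) → ℝ}
    (hw : Integrable fun x => w x ^ 2) {ε : ℝ} (hε : 0 < ε) : ∃ x, w x < ε := by
  by_contra! h
  have h1 := hw.measure_ge_lt_top (pow_pos hε 2)
  have h2 : {x | ε ^ 2 ≤ w x ^ 2} = Set.univ :=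
    Set.eq_univ_of_forall fun x => pow_le_pow_left₀ hε.le (h x) 2
  rw [h2] at h1
  have : Nontrivial (EuclideanSpace ℝ (Fin n)) := inferInstance
  exact h1.ne (measure_univ_of_isAddLeftInvariant _)

/-- A Lipschitz function on `ℝⁿ` whose sublevel sets have finite measure attains its minimum. -/
lemma exists_forall_le_of_lipschitz {f : EuclideanSpace ℝ (Fin n) → ℝ} {L : NNReal}
    (hf : LipschitzWith L f) (hfin : ∀ M, volume {x | f x ≤ M} < ⊤) :
    ∃ x, ∀ y, f x ≤ f y := by
  set E := {x | f x ≤ f 0 + L} with hE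
  have hEm : MeasurableSet E := (isClosed_le hf.continuous continuous_const).measurableSet
  have hlim := tendsto_measure_iInter_atTop (μ := volume)
    (s := fun R : ℕ => E \ Metric.closedBall 0 (R : ℝ))
    (fun R => (hEm.diff Metric.isClosed_closedBall.measurableSet).nullMeasurableSet)
    (fun R S h => Set.sdiff_subset_sdiff_right
      (Metric.closedBall_subset_closedBall (by exact_mod_cast h)))
    ⟨0, ((measure_mono Set.sdiff_subset).trans_lt (hfin _)).ne⟩
  have hempty : ⋂ R : ℕ, E \ Metric.closedBall 0 (R : ℝ) = ∅ := by
    refine Set.eq_empty_of_forall_notMem fun x hx => ?_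
    obtain ⟨R, hR⟩ := exists_nat_ge ‖x‖
    exact (Set.mem_iInter.1 hx R).2 (by simpa using hR)
  rw [hempty, measure_empty] at hlim
  have hball : 0 < volume (Metric.ball (0 : EuclideanSpace ℝ (Fin n)) 1) :=
    Metric.measure_ball_pos _ _ one_pos
  obtain ⟨R, hR⟩ := (hlim.eventually (gt_mem_nhds hball)).exists
  have hbdd : {x | f x ≤ f 0} ⊆ Metric.closedBall 0 ((R : ℝ) + 1) := by
    intro x hx
    by_contra hxR
    simp only [Metric.mem_closedBall, dist_zero_right, not_le] at hxR
    refine hR.not_ge ?_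
    have hsub : Metric.ball x 1 ⊆ E \ Metric.closedBall 0 (R : ℝ) := by
      intro y hy
      rw [Metric.mem_ball] at hy
      refine ⟨?_, fun hyR => ?_⟩
      · have h1 := (le_abs_self _).trans (hf.dist_le_mul y x)
        have h2 : (L : ℝ) * dist y x ≤ L := mul_le_of_le_one_right L.2 hy.le
        have h3 : f x ≤ f 0 := hx
        change f y ≤ f 0 + L
        linarith
      · rw [Metric.mem_closedBall, dist_zero_right] at hyR
        rw [dist_eq_norm] at hy
        have := norm_sub_norm_le x y
        rw [norm_sub_rev] at this
        linarith
    calc volume (Metric.ball (0 : EuclideanSpace ℝ (Fin n)) 1)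
        = volume (Metric.ball x 1) := (Measure.addHaar_ball_center _ x 1).symm
      _ ≤ _ := measure_mono hsub
  have hcomp : IsCompact {x | f x ≤ f 0} :=
    Metric.isCompact_of_isClosed_isBounded (isClosed_le hf.continuous continuous_const)
      (Metric.isBounded_closedBall.subset hbdd)
  obtain ⟨x, hx, hmin⟩ := hcomp.exists_isMinOn ⟨0, le_refl (f 0)⟩ hf.continuous.continuousOn
  refine ⟨x, fun y => ?_⟩
  rcases le_total (f y) (f 0) with h | h
  · exact hmin h
  · exact (show f x ≤ f 0 from hx).trans h

end FiniteMeasure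

section System

variable {n : ℕ} {u : EuclideanSpace ℝ (Fin n) → ℝ}

/-- For `w = u^(-(m+n-2)/2)`, the two Euler-Lagrange equations at a point amount to prescribing
`|∇u|²` and `Δu` there. -/
lemma euler_lagrange_system (hu : ContDiff ℝ (⊤ : ℕ∞) u) (hpos : ∀ y, 0 < u y) {m k a b : ℝ}
    (hn : 3 ≤ n) (hm : 0 < m) (hk : 0 < k) {w : EuclideanSpace ℝ (Fin n) → ℝ}
    (hw : ∀ y, w y = u y ^ (-((m + n - 2) / 2))) {x : EuclideanSpace ℝ (Fin n)}
    (hEL1 : -lapl w x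
        + (2 * m * (m + n - k) / ((n : ℝ) * k * (m + n - 2))) * a *
          w x ^ ((m + n + 2 - 2 * k) / (m + (n : ℝ) - 2))
      = ((m + n) * (2 * m + k * ((n : ℝ) - 2)) / ((n : ℝ) * k * (m + n - 2))) *
          b * w x ^ ((m + (n : ℝ) + 2) / (m + (n : ℝ) - 2)))
    (hEL2 : ‖gradient w x‖ ^ 2
        - ((m + n - 2) / (2 * (m + n - 1))) * lapl (fun y => w y ^ 2) x
        + (2 * (m - k) / ((n : ℝ) * k)) * a *
          w x ^ (2 * (m + n - k) / (m + (n : ℝ) - 2))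
      = ((2 * m + k * ((n : ℝ) - 2)) / ((n : ℝ) * k)) * b *
          w x ^ (2 * (m + n) / (m + (n : ℝ) - 2))) :
    ‖gradient u x‖ ^ 2
        = 2 * (m + k * (n - 1)) * (4 * a / (n * k * (m + n - 2) ^ 2)) * u x ^ k
          - 4 * b / (n * k * (m + n - 2) ^ 2) * (2 * m + k * (n - 2)) ∧
      lapl u x = (m + n - 1) * n * k * (4 * a / (n * k * (m + n - 2) ^ 2)) * u x ^ (k - 1) := by
  have hn' : (3 : ℝ) ≤ n := by exact_mod_cast hn
  have hx := hpos x
  obtain ⟨s, hs⟩ : ∃ s : ℝ, s = (m + n - 2) / 2 := ⟨_, rfl⟩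
  have hs0 : 0 < s := by rw [hs]; linarith
  have hm' : m = 2 * s + 2 - n := by rw [hs]; ring
  have hw1 : w = fun y => u y ^ (-s) := funext fun y => by rw [hw, hs]
  have hw2 : (fun y => w y ^ 2) = fun y => u y ^ (-(2 * s)) := by
    funext y
    rw [hw1, ← Real.rpow_mul_natCast (hpos y).le]
    congr 1
    push_cast
    ring
  have hpw : ∀ e r : ℝ, -s * e = r → w x ^ e = u x ^ r := by
    intro e r h
    rw [hw1, ← Real.rpow_mul hx.le, h]
  have hN : m + n - 2 = 2 * s := by rw [hs]; ring
  have hsplit : ∀ r t : ℝ, u x ^ (r + t) = u x ^ r * u x ^ t := fun r t => Real.rpow_add hx r t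
  rw [hpw _ (-s - 2 + k) (by rw [hN, hm']; field_simp; ring),
    hpw _ (-s - 2) (by rw [hN, hm']; field_simp; ring), hw1, lapl_rpow hu hpos,
    show -s - 1 = (-s - 2) + 1 by ring, hsplit, hsplit, Real.rpow_one] at hEL1
  rw [hpw _ (-(2 * s) - 2 + k) (by rw [hN, hm']; field_simp; ring),
    hpw _ (-(2 * s) - 2) (by rw [hN, hm']; field_simp; ring), hw2, lapl_rpow hu hpos, hw1,
    norm_gradient_rpow_sq hu hpos, mul_pow, ← Real.rpow_mul_natCast hx.le,
    show (-s - 1) * ((2 : ℕ) : ℝ) = -(2 * s) - 2 by push_cast; ring,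
    show -(2 * s) - 1 = (-(2 * s) - 2) + 1 by ring, hsplit, hsplit, Real.rpow_one] at hEL2
  rw [Real.rpow_sub_one hx.ne']
  have hX := (Real.rpow_pos_of_pos hx (-s - 2)).ne'
  have hY := (Real.rpow_pos_of_pos hx (-(2 * s) - 2)).ne'
  generalize u x ^ (-s - 2) = X at *
  generalize u x ^ (-(2 * s) - 2) = Y at *
  generalize u x ^ k = K at *
  generalize u x = U at *
  generalize lapl u x = D at *
  generalize ‖gradient u x‖ ^ 2 = G at *
  have hN1 : m + n - 1 = 2 * s + 1 := by rw [hs]; ring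
  rw [hN] at hEL1 hEL2 ⊢
  rw [hN1] at hEL2 ⊢
  have hs1 : 2 * s + 1 ≠ 0 := by positivity
  have hn0 : (n : ℝ) ≠ 0 := by positivity
  have e1 : s * U * D - s * (s + 1) * G + 2 * m * (m + n - k) / (n * k * (2 * s)) * a * K
      = (m + n) * (2 * m + k * (n - 2)) / (n * k * (2 * s)) * b := by
    apply mul_left_cancel₀ hX
    linear_combination hEL1
  have e2 : s ^ 2 * G - 2 * s / (2 * (2 * s + 1)) * (-(2 * s) * U * D + 2 * s * (2 * s + 1) * G)
      + 2 * (m - k) / (n * k) * a * K = (2 * m + k * (n - 2)) / (n * k) * b := by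
    apply mul_left_cancel₀ hY
    linear_combination hEL2
  rw [hm'] at e1 e2 ⊢
  have hG : G = 2 * (2 * s + 2 - n + k * (n - 1)) * (4 * a / (n * k * (2 * s) ^ 2)) * K
      - 4 * b / (n * k * (2 * s) ^ 2) * (2 * (2 * s + 2 - n) + k * (n - 2)) := by
    field_simp at e1 e2 ⊢
    linear_combination 4 * (e2 - e1)
  refine ⟨hG, ?_⟩
  rw [eq_comm, mul_div_assoc', div_eq_iff hx.ne']
  rw [hG] at e1
  field_simp at e1 ⊢
  apply mul_left_cancel₀ (mul_ne_zero hn0 hk.ne')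
  linear_combination (-1) * e1

variable {m k c q : ℝ}

lemma k_le_one_of_system (hu : ContDiff ℝ (⊤ : ℕ∞) u) (hpos : ∀ y, 0 < u y)
    (hn : 3 ≤ n) (hm : 0 < m) (hk : 0 < k) (hk' : k < m + n) (hc : 0 < c) (hq : 0 < q)
    (hgrad : ∀ x, ‖gradient u x‖ ^ 2
      = 2 * (m + k * (n - 1)) * c * u x ^ k - q * (2 * m + k * (n - 2)))
    (hlapl : ∀ x, lapl u x = (m + n - 1) * n * k * c * u x ^ (k - 1))
    (hunb : ∀ M : ℝ, ∃ x, M < u x) : k ≤ 1 := by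
  by_contra! h1
  have hn' : (3 : ℝ) ≤ n := by exact_mod_cast hn
  have hl : 0 < m + k * (n - 1) := by nlinarith
  have hd : 0 < 2 * m + k * (n - 2) := by nlinarith
  obtain ⟨x, hx⟩ := hunb ((q / c) ^ k⁻¹)
  have hK : q < c * u x ^ k := by
    have := Real.rpow_lt_rpow (by positivity) hx hk
    rwa [Real.rpow_inv_rpow (by positivity) hk.ne', div_lt_iff₀' hc] at this
  have hgpos : 0 < ∑ i, partialDeriv i u x ^ 2 := by
    rw [← norm_gradient_sq, hgrad]
    nlinarith [mul_pos hk (show (0 : ℝ) < n by linarith)]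
  have hy : u x ^ (k - 2) * u x ^ k = (u x ^ (k - 1)) ^ 2 := by
    rw [← Real.rpow_add (hpos x), ← Real.rpow_mul_natCast (hpos x).le]
    congr 1
    push_cast
    ring
  have hB := sum_hessian_sq hu hpos hgrad hlapl x
  have hE := sum_partialDeriv_mul_hessian hu hpos hgrad
  have hR := le_sum_sq_of_eigenvector (fun i j => partialDeriv i (partialDeriv j u) x)
    (fun i => partialDeriv i u x) (k * c * (m + k * (n - 1)) * u x ^ (k - 1))
    (k * c * (m + n - k) * u x ^ (k - 1)) hgpos
    (fun i => by rw [hE]; ring)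
  rw [← lapl_eq_sum_partialDeriv hu, hlapl, hB] at hR
  have hz := Real.rpow_pos_of_pos (hpos x) (k - 2)
  have hfac : 0 < (k * c * (n - 1) * (m + n - k)) * ((k - 1) * (2 * m + k * (n - 2))) := by
    have : 0 < (n : ℝ) - 1 := by linarith
    have : 0 < m + n - k := by linarith
    have : 0 < k - 1 := by linarith
    positivity
  have hcon : 0 ≤ (k * c * (n - 1) * (m + n - k)) * ((k - 1) * (2 * m + k * (n - 2)))
      * (q * u x ^ (k - 2) - c * (u x ^ (k - 1)) ^ 2) := by
    linear_combination hR + 2 * (m + k * (n - 1)) * c * (k - 1)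
      * (k * c * (m + k * (n - 1)) - (m + n - 1) * n * k * c) * hy
  rw [← hy] at hcon
  have := nonneg_of_mul_nonneg_right hcon hfac
  nlinarith

lemma one_le_k_of_system (hu : ContDiff ℝ (⊤ : ℕ∞) u) (hpos : ∀ y, 0 < u y)
    (hn : 3 ≤ n) (hm : 0 < m) (hk : 0 < k) (hc : 0 < c) (hq : 0 < q)
    (hgrad : ∀ x, ‖gradient u x‖ ^ 2
      = 2 * (m + k * (n - 1)) * c * u x ^ k - q * (2 * m + k * (n - 2)))
    (hlapl : ∀ x, lapl u x = (m + n - 1) * n * k * c * u x ^ (k - 1))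
    (hfin : ∀ M : ℝ, volume {x | u x ≤ M} < ⊤) : 1 ≤ k := by
  by_contra! h1
  have hn' : (3 : ℝ) ≤ n := by exact_mod_cast hn
  have hl : 0 < m + k * (n - 1) := by nlinarith
  have hd : 0 < 2 * m + k * (n - 2) := by nlinarith
  set r := 1 - k / 2 with hr
  have hr0 : 0 < r := by rw [hr]; linarith
  have hf := hu.rpow_of_pos hpos r
  set P := 2 * (m + k * (n - 1)) * c with hP
  have hP0 : 0 < P := by positivity
  have hlip : LipschitzWith (Real.toNNReal (√P)) (fun y => u y ^ r) := by
    refine lipschitzWith_of_nnnorm_fderiv_le (𝕜 := ℝ) (hf.differentiable (by simp)) fun x => ?_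
    rw [← NNReal.coe_le_coe, coe_nnnorm, Real.coe_toNNReal _ (Real.sqrt_nonneg _)]
    apply Real.le_sqrt_of_sq_le
    have hk0 := Real.rpow_pos_of_pos (hpos x) k
    rw [norm_fderiv_sq, ← norm_gradient_sq, norm_gradient_rpow_sq hu hpos, hgrad, mul_pow,
      ← Real.rpow_mul_natCast (hpos x).le, show (r - 1) * ((2 : ℕ) : ℝ) = -k by
        rw [hr]; push_cast; ring, Real.rpow_neg (hpos x).le, mul_assoc]
    have hle : (u x ^ k)⁻¹ * (P * u x ^ k - q * (2 * m + k * (n - 2))) ≤ P := by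
      rw [inv_mul_le_iff₀ hk0]
      nlinarith [mul_pos hq hd]
    have hnn : 0 ≤ (u x ^ k)⁻¹ * (P * u x ^ k - q * (2 * m + k * (n - 2))) := by
      rw [← hgrad]
      positivity
    have hr1 : r ^ 2 ≤ 1 := by
      rw [hr]
      nlinarith
    nlinarith
  obtain ⟨x, hx⟩ := exists_forall_le_of_lipschitz hlip fun M => by
    refine (measure_mono fun y hy => ?_).trans_lt (hfin (|M| ^ r⁻¹))
    have h2 := Real.rpow_le_rpow (Real.rpow_nonneg (hpos y).le r)
      ((show u y ^ r ≤ M from hy).trans (le_abs_self M)) (inv_nonneg.2 hr0.le)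
    rwa [Real.rpow_rpow_inv (hpos y).le hr0.ne'] at h2
  have hmin : IsLocalMin u x := Filter.Eventually.of_forall fun y =>
    (Real.rpow_le_rpow_iff (hpos x).le (hpos y).le hr0).1 (hx y)
  have hzero : ‖gradient u x‖ ^ 2 = 0 := by
    simp [gradient, hmin.fderiv_eq_zero]
  have hB := sum_hessian_sq hu hpos hgrad hlapl x
  rw [← hgrad, hzero, mul_zero, add_zero] at hB
  have hS := sum_sub_scalar_sq (fun i j => partialDeriv i (partialDeriv j u) x)
    ((m + n - 1) * k * c * u x ^ (k - 1))
  have hnn : 0 ≤ ∑ i, ∑ j, (partialDeriv i (partialDeriv j u) x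
      - (m + n - 1) * k * c * u x ^ (k - 1) * if i = j then 1 else 0) ^ 2 :=
    Finset.sum_nonneg fun i _ => Finset.sum_nonneg fun j _ => sq_nonneg _
  rw [hS, hB, ← lapl_eq_sum_partialDeriv hu, hlapl, hP] at hnn
  have hy := Real.rpow_pos_of_pos (hpos x) (k - 1)
  have hfac : 0 < (m + n - 1) * n * (k * c * u x ^ (k - 1)) ^ 2 * (n - 1) := by
    have : 0 < (n : ℝ) - 1 := by linarith
    have : 0 < m + n - 1 := by linarith
    positivity
  have hcon : 0 ≤ (m + n - 1) * n * (k * c * u x ^ (k - 1)) ^ 2 * (n - 1) * (k - 1) := by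
    linear_combination hnn
  have := nonneg_of_mul_nonneg_right hcon hfac
  linarith

lemma hessian_eq_of_system (hu : ContDiff ℝ (⊤ : ℕ∞) u) (hpos : ∀ y, 0 < u y)
    (hgrad : ∀ x, ‖gradient u x‖ ^ 2 = 2 * (m + n - 1) * c * u x - q)
    (hlapl : ∀ x, lapl u x = (m + n - 1) * n * c) (x : EuclideanSpace ℝ (Fin n)) (i j : Fin n) :
    partialDeriv i (partialDeriv j u) x = (m + n - 1) * c * if i = j then 1 else 0 := by
  have hB := sum_hessian_sq hu hpos (k := 1) (P := 2 * (m + n - 1) * c)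
    (fun y => by rw [hgrad, Real.rpow_one]) (R := (m + n - 1) * n * c)
    (fun y => by rw [hlapl, sub_self, Real.rpow_zero, mul_one]) x
  have hS := sum_sub_scalar_sq (fun i j => partialDeriv i (partialDeriv j u) x)
    ((m + n - 1) * c)
  rw [hB, ← lapl_eq_sum_partialDeriv hu, hlapl, sub_self, Real.rpow_zero] at hS
  have h0 : ∑ i, ∑ j, (partialDeriv i (partialDeriv j u) x
      - (m + n - 1) * c * if i = j then 1 else 0) ^ 2 = 0 := by
    rw [hS]
    ring
  rw [Finset.sum_eq_zero_iff_of_nonneg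
    fun i _ => Finset.sum_nonneg fun j _ => sq_nonneg _] at h0
  have h1 := h0 i (Finset.mem_univ i)
  rw [Finset.sum_eq_zero_iff_of_nonneg fun j _ => sq_nonneg _] at h1
  exact sub_eq_zero.1 (pow_eq_zero_iff two_ne_zero |>.1 (h1 j (Finset.mem_univ j)))

end System

/-- A positive quadratic polynomial with positive leading coefficient has negative discriminant. -/
lemma norm_sq_lt_of_quadratic_pos {E : Type*} [NormedAddCommGroup E] [InnerProductSpace ℝ E]
    {α γ : ℝ} {b : E} (hα : 0 < α) (h : ∀ x : E, 0 < α * ‖x‖ ^ 2 + ⟪b, x⟫ + γ) :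
    ‖b‖ ^ 2 < 4 * α * γ := by
  have h1 := h ((-(2 * α)⁻¹) • b)
  rw [norm_smul, inner_smul_right, real_inner_self_eq_norm_sq, mul_pow, Real.norm_eq_abs,
    sq_abs] at h1
  field_simp at h1
  nlinarith

/-- if `w` satisfies both Euler–Lagrange identities (criticality in
`w` and in the density `v` at `v ≡ 1`), then `k = 1` and `u = w^{-2/(m+n-2)}` is a
positive-definite quadratic polynomial; in particular `Hess u = (Δu/n)·Id` with
`Δu` constant. -/
theorem gns_doubly_critical_euclidean (n : ℕ) (hn : 3 ≤ n) (m k : ℝ) (hm : 0 < m)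
    (hk : 0 < k) (hk' : k ≤ (m + n + 2) / 2)
    (w : EuclideanSpace ℝ (Fin n) → ℝ)
    (hsmooth : ContDiff ℝ (⊤ : ℕ∞) w) (hpos : ∀ x, 0 < w x)
    (hFint : Integrable (fun x => ‖gradient w x‖ ^ 2))
    (hAint : Integrable (fun x => w x ^ (2 * (m + (n : ℝ) - k) / (m + (n : ℝ) - 2))))
    (hBint : Integrable (fun x => w x ^ (2 * (m + (n : ℝ)) / (m + (n : ℝ) - 2))))
    (hL2 : Integrable (fun x => w x ^ 2))
    (hF : 0 < gnsF n w) (hA : 0 < gnsA n m k w) (hB : 0 < gnsB n m w)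
    (hEL1 : ∀ x, -lapl w x
        + (2 * m * (m + n - k) / ((n : ℝ) * k * (m + n - 2))) * (gnsF n w / gnsA n m k w) *
          w x ^ ((m + n + 2 - 2 * k) / (m + (n : ℝ) - 2))
      = ((m + n) * (2 * m + k * ((n : ℝ) - 2)) / ((n : ℝ) * k * (m + n - 2))) *
          (gnsF n w / gnsB n m w) * w x ^ ((m + (n : ℝ) + 2) / (m + (n : ℝ) - 2)))
    (hEL2 : ∀ x, ‖gradient w x‖ ^ 2
        - ((m + n - 2) / (2 * (m + n - 1))) * lapl (fun y => w y ^ 2) x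
        + (2 * (m - k) / ((n : ℝ) * k)) * (gnsF n w / gnsA n m k w) *
          w x ^ (2 * (m + n - k) / (m + (n : ℝ) - 2))
      = ((2 * m + k * ((n : ℝ) - 2)) / ((n : ℝ) * k)) * (gnsF n w / gnsB n m w) *
          w x ^ (2 * (m + n) / (m + (n : ℝ) - 2))) :
    k = 1 ∧
      (∃ (α : ℝ) (b : EuclideanSpace ℝ (Fin n)) (γ : ℝ), 0 < α ∧ 4 * α * γ > ‖b‖ ^ 2 ∧
        ∀ x, w x ^ (-2 / (m + (n : ℝ) - 2)) = α * ‖x‖ ^ 2 + ⟪b, x⟫ + γ) ∧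
      (∀ x i j, hess (fun y => w y ^ (-2 / (m + (n : ℝ) - 2))) x i j =
        (lapl (fun y => w y ^ (-2 / (m + (n : ℝ) - 2))) x / n) * (if i = j then 1 else 0)) ∧
      (∃ c : ℝ, ∀ x, lapl (fun y => w y ^ (-2 / (m + (n : ℝ) - 2))) x = c) := by
  have hn' : (3 : ℝ) ≤ n := by exact_mod_cast hn
  have : NeZero n := ⟨by omega⟩
  have hN : 0 < m + n - 2 := by linarith
  set p := -2 / (m + (n : ℝ) - 2) with hp
  have hp0 : p < 0 := div_neg_of_neg_of_pos (by norm_num) hN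
  set u : EuclideanSpace ℝ (Fin n) → ℝ := fun y => w y ^ p with hu_def
  have hpinv : p⁻¹ = -((m + n - 2) / 2) := by
    rw [hp]
    field_simp
  have hu : ContDiff ℝ (⊤ : ℕ∞) u := hsmooth.rpow_of_pos hpos p
  have hupos : ∀ y, 0 < u y := fun y => Real.rpow_pos_of_pos (hpos y) p
  have hwu : ∀ y, w y = u y ^ (-((m + n - 2) / 2)) := fun y => by
    rw [← hpinv, hu_def, Real.rpow_rpow_inv (hpos y).le hp0.ne]
  have hsys := fun x => euler_lagrange_system hu hupos hn hm hk hwu (hEL1 x) (hEL2 x)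
  have hc : 0 < 4 * (gnsF n w / gnsA n m k w) / (n * k * (m + n - 2) ^ 2) := by positivity
  have hq : 0 < 4 * (gnsF n w / gnsB n m w) / (n * k * (m + n - 2) ^ 2) := by positivity
  generalize 4 * (gnsF n w / gnsA n m k w) / (n * k * (m + n - 2) ^ 2) = c at hsys hc
  generalize 4 * (gnsF n w / gnsB n m w) / (n * k * (m + n - 2) ^ 2) = q at hsys hq
  have hle : k ≤ 1 := by
    refine k_le_one_of_system hu hupos hn hm hk (by linarith) hc hq (fun x => (hsys x).1)
      (fun x => (hsys x).2) fun M => ?_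
    obtain ⟨x, hx⟩ := exists_lt_of_integrable_sq hL2
      (Real.rpow_pos_of_pos (show 0 < |M| + 1 by positivity) p⁻¹)
    refine ⟨x, ?_⟩
    have h := Real.rpow_lt_rpow_of_neg (hpos x) hx hp0
    rw [Real.rpow_inv_rpow (by positivity) hp0.ne] at h
    linarith [le_abs_self M]
  have hge : 1 ≤ k := by
    refine one_le_k_of_system hu hupos hn hm hk hc hq (fun x => (hsys x).1)
      (fun x => (hsys x).2) fun M => ?_
    have hM : 0 < |M| + 1 := by positivity
    refine (measure_mono fun y hy => ?_).trans_lt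
      (hL2.measure_ge_lt_top (pow_pos (Real.rpow_pos_of_pos hM p⁻¹) 2))
    have hy' : u y ≤ |M| + 1 := by
      have : u y ≤ M := hy
      linarith [le_abs_self M]
    have h := Real.rpow_le_rpow_of_nonpos (hupos y) hy' (inv_nonpos.2 hp0.le)
    rw [hpinv, ← hwu, ← hpinv] at h
    exact pow_le_pow_left₀ (Real.rpow_nonneg hM.le _) h 2
  obtain rfl : k = 1 := le_antisymm hle hge
  have hlapl : ∀ x, lapl u x = (m + n - 1) * n * c := fun x => by
    rw [(hsys x).2, sub_self, Real.rpow_zero]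
    ring
  have hH := hessian_eq_of_system hu hupos (m := m) (c := c) (q := q * (2 * m + 1 * (n - 2)))
    (fun x => by rw [(hsys x).1, Real.rpow_one]; ring) hlapl
  obtain ⟨b, γ, hbγ⟩ := eq_quadratic_of_hessian hu hH
  have hα : 0 < (m + n - 1) * c / 2 := by
    have : 0 < m + n - 1 := by linarith
    positivity
  refine ⟨rfl, ⟨_, b, γ, hα, norm_sq_lt_of_quadratic_pos hα fun x => ?_, hbγ⟩, fun x i j => ?_,
    _, hlapl⟩
  · rw [← hbγ]
    exact hupos x
  · rw [hlapl, hess, ← partialDeriv_partialDeriv hu, hH]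
    have : (n : ℝ) ≠ 0 := by positivity
    field_simp
end
end
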